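/- Let G be a finite group, k a field, and M an endofinite kG-module such that the subadditive function χ_M is tensor closed. Then for every finite dimensional kG-module X, one has X ∈ Adloc(χ_M) if and only if Ext^n_{kG}(X, M) = 0 for all n ≥ 1. -/

import Mathlib

/-- The composition length of a module (the length of a composition series,
zero if none exists). -/
noncomputable def compLength (R : Type) [Ring R] (M : Type) [AddCommGroup M] [Module R M] : ℕ := by
  classical
  exact if h : ∃ s : CompositionSeries (Submodule R M), s.head = ⊥ ∧ s.last = ⊤ then
    h.choose.length else 0

/-- A module `M` is endofinite if it has finite composition length over its
endomorphism ring, which acts on `M` by application. -/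
def IsEndofinite (A : Type) [Ring A] (M : Type) [AddCommGroup M] [Module A M] : Prop :=
  IsFiniteLength (Module.End A M) M

/-- The subadditive function `χ_M` associated to a module `M`:
`χ_M(X) = ℓ_{End_A(M)} Hom_A(X, M)`, where `End_A(M)` acts by postcomposition. -/
noncomputable def chiMod (A : Type) [Ring A] (M : Type) [AddCommGroup M] [Module A M]
    (X : Type) [AddCommGroup X] [Module A X] : ℕ :=
  compLength (Module.End A M) (X →ₗ[A] M)

/-- A subadditive function on the finite dimensional (i.e. finitely generated)
modules over a finite dimensional algebra `A`: it depends only on the isomorphism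
class, is additive on direct sums, and satisfies `χ(X) + χ(Z) ≥ χ(Y)` for every
exact sequence `X → Y → Z → 0`. -/
def IsSubadditive (A : Type) [Ring A]
    (χ : (X : Type) → [AddCommGroup X] → [Module A X] → ℕ) : Prop :=
  (∀ (X Y : Type) [AddCommGroup X] [Module A X] [AddCommGroup Y] [Module A Y],
      Module.Finite A X → Module.Finite A Y →
      (X ≃ₗ[A] Y) → χ X = χ Y) ∧
  (∀ (X Y : Type) [AddCommGroup X] [Module A X] [AddCommGroup Y] [Module A Y],
      Module.Finite A X → Module.Finite A Y →
      χ (X × Y) = χ X + χ Y) ∧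
  (∀ (X Y Z : Type) [AddCommGroup X] [Module A X] [AddCommGroup Y] [Module A Y]
      [AddCommGroup Z] [Module A Z],
      Module.Finite A X → Module.Finite A Y → Module.Finite A Z →
      ∀ (f : X →ₗ[A] Y) (g : Y →ₗ[A] Z),
      Function.Exact f g → Function.Surjective g → χ Y ≤ χ X + χ Z)

/-- Membership in the additive locus `Adloc(χ)`: `Z` is finite dimensional and
`χ(X) - χ(Y) + χ(Z) = 0` for every short exact sequence `0 → X → Y → Z → 0` of
finite dimensional modules. -/
def MemAdloc (A : Type) [Ring A]
    (χ : (X : Type) → [AddCommGroup X] → [Module A X] → ℕ)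
    (Z : Type) [AddCommGroup Z] [Module A Z] : Prop :=
  Module.Finite A Z ∧
  ∀ (X Y : Type) [AddCommGroup X] [Module A X] [AddCommGroup Y] [Module A Y],
    Module.Finite A X → Module.Finite A Y →
    ∀ (f : X →ₗ[A] Y) (g : Y →ₗ[A] Z),
    Function.Injective f → Function.Exact f g → Function.Surjective g →
    χ X + χ Z = χ Y

/-- The tensor product over `k` of two `kG`-modules, with the diagonal `G`-action. -/
noncomputable abbrev dtensor (k G : Type) [Field k] [Group G] (M N : Type)
    [AddCommGroup M] [Module (MonoidAlgebra k G) M]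
    [AddCommGroup N] [Module (MonoidAlgebra k G) N] : Type :=
  ((Representation.ofModule (k := k) (G := G) M).tprod (Representation.ofModule N)).asModule

/-- The additive group structure of the tensor product (no longer found by instance search). -/
noncomputable instance dtensorAddCommGroup (k G : Type) [Field k] [Group G] (M N : Type)
    [AddCommGroup M] [Module (MonoidAlgebra k G) M]
    [AddCommGroup N] [Module (MonoidAlgebra k G) N] :
    AddCommGroup (dtensor k G M N) :=
  @TensorProduct.addCommGroup k _ (RestrictScalars k (MonoidAlgebra k G) M)
    (RestrictScalars k (MonoidAlgebra k G) N)
    (instAddCommGroupRestrictScalars k (MonoidAlgebra k G) M) _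
    (RestrictScalars.module k (MonoidAlgebra k G) M) _

/-- Mathlib's `kG`-module structure on `Representation.asModule`, over the additive group
structure above (no longer found by instance search). -/
noncomputable instance dtensorModule (k G : Type) [Field k] [Group G] (M N : Type)
    [AddCommGroup M] [Module (MonoidAlgebra k G) M]
    [AddCommGroup N] [Module (MonoidAlgebra k G) N] :
    @Module (MonoidAlgebra k G) (dtensor k G M N) _
      (dtensorAddCommGroup k G M N).toAddCommMonoid :=
  Representation.instModuleMonoidAlgebraAsModule
    ((Representation.ofModule (k := k) (G := G) M).tprod (Representation.ofModule N))

/-- A function on `kG`-modules is tensor closed if its additive locus is closed under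
tensoring (over `k`, with diagonal `G`-action) with finite dimensional modules. -/
def TensorClosed (k G : Type) [Field k] [Group G]
    (χ : (X : Type) → [AddCommGroup X] → [Module (MonoidAlgebra k G) X] → ℕ) : Prop :=
  ∀ (M N : Type) [AddCommGroup M] [Module (MonoidAlgebra k G) M]
    [AddCommGroup N] [Module (MonoidAlgebra k G) N],
    MemAdloc (MonoidAlgebra k G) χ M → Module.Finite (MonoidAlgebra k G) N →
    MemAdloc (MonoidAlgebra k G) χ (dtensor k G M N)

/-!
Since `χ_M` counts lengths over `End(M)` and `0 → Hom(Z, M) → Hom(Y, M) → Hom(X, M)` is exact,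
additivity of `χ_M` on `0 → X → Y → Z → 0` means that `Hom(Y, M) → Hom(X, M)` is surjective.
Taking `Y` free shows that a finitely generated `Z` lies in `Adloc(χ_M)` if and only if
`Ext¹(Z, M) = 0`.

For the higher vanishing, tensor the augmentation sequence `0 → I → kG → k → 0` with `X`. In
`0 → X ⊗ I → X ⊗ kG → X → 0` the middle term is projective, because the diagonal action on
`X ⊗ kG` can be untwisted to the action on the second factor alone. Hence `Extⁿ⁺¹(X, M)` vanishes
as soon as `Extⁿ(X ⊗ I, M)` does, and tensor closedness keeps `X ⊗ I` in the additive locus.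
-/

section ExtComparison

open CategoryTheory

universe w v u

variable {R : Type*} [Ring R] {C : Type u} [Category.{v} C] [Abelian C] [Linear R C]
  [EnoughProjectives C] [HasExt.{w} C]

theorem subsingleton_ext_obj_iff (X Y : C) (n : ℕ) :
    Subsingleton (((Ext R C (n + 1)).obj (Opposite.op X)).obj Y) ↔
      Subsingleton (Abelian.Ext.{w} X Y (n + 1)) := by
  let P := projectiveResolution X
  rw [← ModuleCat.isZero_iff_subsingleton, (P.isoExt (R := R) (n + 1) Y).isZero_iff,
    ← HomologicalComplex.exactAt_iff_isZero_homology,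
    HomologicalComplex.exactAt_iff' _ n (n + 1) (n + 2) (by simp) (by simp),
    ShortComplex.moduleCat_exact_iff, subsingleton_iff_forall_eq 0]
  constructor
  · intro exact_at e
    obtain ⟨f, hf, rfl⟩ := P.extMk_surjective e (n + 2) rfl
    exact (P.extMk_eq_zero_iff f _ _ hf n rfl).2 (exact_at f hf)
  · intro ext_eq_zero f hf
    exact (P.extMk_eq_zero_iff f _ rfl hf n rfl).1 (ext_eq_zero _)

end ExtComparison

section DimensionShift

open CategoryTheory

universe w v u

variable {C : Type u} [Category.{v} C] [Abelian C] [HasExt.{w} C] {S : ShortComplex C}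

theorem exists_comp_eq_of_subsingleton_ext_one (hS : S.ShortExact) {Y : C}
    (h : Subsingleton (Abelian.Ext.{w} S.X₃ Y 1)) (φ : S.X₁ ⟶ Y) : ∃ ψ : S.X₂ ⟶ Y, S.f ≫ ψ = φ := by
  obtain ⟨x, hx⟩ := Abelian.Ext.contravariant_sequence_exact₁ hS Y (Abelian.Ext.mk₀ φ)
    (n₁ := 1) rfl (Subsingleton.elim _ _)
  obtain ⟨ψ, rfl⟩ := (Abelian.Ext.mk₀_bijective _ _).2 x
  exact ⟨ψ, (Abelian.Ext.mk₀_bijective _ _).1 (by rwa [← Abelian.Ext.mk₀_comp_mk₀])⟩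

theorem exists_extClass_comp_eq [Projective S.X₂] (hS : S.ShortExact) {Y : C} {n : ℕ}
    (e : Abelian.Ext.{w} S.X₃ Y (n + 1)) :
    ∃ x : Abelian.Ext.{w} S.X₁ Y n, hS.extClass.comp x (add_comm 1 n) = e :=
  Abelian.Ext.contravariant_sequence_exact₃ hS Y e (Abelian.Ext.eq_zero_of_projective _)
    (add_comm 1 n)

theorem subsingleton_ext_one_of_forall_exists_comp_eq [Projective S.X₂] (hS : S.ShortExact) {Y : C}
    (h : ∀ φ : S.X₁ ⟶ Y, ∃ ψ : S.X₂ ⟶ Y, S.f ≫ ψ = φ) :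
    Subsingleton (Abelian.Ext.{w} S.X₃ Y 1) := by
  refine subsingleton_of_forall_eq 0 fun e ↦ ?_
  obtain ⟨x, rfl⟩ := exists_extClass_comp_eq hS e
  obtain ⟨φ, rfl⟩ := (Abelian.Ext.mk₀_bijective _ _).2 x
  obtain ⟨ψ, rfl⟩ := h φ
  rw [← Abelian.Ext.mk₀_comp_mk₀]
  exact hS.extClass_comp_assoc _

theorem subsingleton_ext_succ [Projective S.X₂] (hS : S.ShortExact) {Y : C} {n : ℕ}
    (h : Subsingleton (Abelian.Ext.{w} S.X₁ Y n)) :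
    Subsingleton (Abelian.Ext.{w} S.X₃ Y (n + 1)) := by
  refine subsingleton_of_forall_eq 0 fun e ↦ ?_
  obtain ⟨x, rfl⟩ := exists_extClass_comp_eq hS e
  rw [Subsingleton.elim x 0, Abelian.Ext.comp_zero]

end DimensionShift

section ModuleExt

open CategoryTheory

universe w v u

variable {A : Type u} [Ring A] [HasExt.{w} (ModuleCat.{v} A)] {X Y Z M : Type v}
  [AddCommGroup X] [Module A X] [AddCommGroup Y] [Module A Y] [AddCommGroup Z] [Module A Z]
  [AddCommGroup M] [Module A M] {f : X →ₗ[A] Y} {g : Y →ₗ[A] Z}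

theorem surjective_lcomp_of_subsingleton_ext_one (hf : Function.Injective f)
    (hfg : Function.Exact f g) (hg : Function.Surjective g)
    (h : Subsingleton (Abelian.Ext.{w} (ModuleCat.of A Z) (ModuleCat.of A M) 1)) :
    Function.Surjective (f.lcomp ℕ M) := fun φ ↦ by
  let S := ModuleCat.shortComplexOfCompEqZero f g hfg.linearMap_comp_eq_zero
  have hS : S.ShortExact := ModuleCat.shortComplex_shortExact S hfg hf hg
  obtain ⟨ψ, hψ⟩ := exists_comp_eq_of_subsingleton_ext_one hS h (ModuleCat.ofHom φ)
  exact ⟨ψ.hom, congrArg ModuleCat.Hom.hom hψ⟩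

theorem subsingleton_ext_one_of_surjective_lcomp [Module.Projective A Y]
    (hg : Function.Surjective g) (h : Function.Surjective (g.ker.subtype.lcomp ℕ M)) :
    Subsingleton (Abelian.Ext.{w} (ModuleCat.of A Z) (ModuleCat.of A M) 1) := by
  have : Projective g.shortComplexKer.X₂ :=
    ModuleCat.projective_of_categoryTheory_projective (ModuleCat.of A Y)
  exact subsingleton_ext_one_of_forall_exists_comp_eq (g.shortExact_shortComplexKer hg)
    fun φ ↦ (h φ.hom).elim fun ψ hψ ↦ ⟨ModuleCat.ofHom ψ, ModuleCat.hom_ext hψ⟩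

theorem subsingleton_moduleCat_ext_succ [Module.Projective A Y] (hf : Function.Injective f)
    (hfg : Function.Exact f g) (hg : Function.Surjective g) {n : ℕ}
    (h : Subsingleton (Abelian.Ext.{w} (ModuleCat.of A X) (ModuleCat.of A M) n)) :
    Subsingleton (Abelian.Ext.{w} (ModuleCat.of A Z) (ModuleCat.of A M) (n + 1)) := by
  let S := ModuleCat.shortComplexOfCompEqZero f g hfg.linearMap_comp_eq_zero
  have hS : S.ShortExact := ModuleCat.shortComplex_shortExact S hfg hf hg
  have : Projective S.X₂ := ModuleCat.projective_of_categoryTheory_projective (ModuleCat.of A Y)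
  exact subsingleton_ext_succ hS h

end ModuleExt

section Length

theorem coe_compLength {R M : Type} [Ring R] [AddCommGroup M] [Module R M]
    (h : IsFiniteLength R M) : (compLength R M : ℕ∞) = Module.length R M := by
  have exists_series := isFiniteLength_iff_exists_compositionSeries.1 h
  rw [compLength, dif_pos exists_series]
  exact Module.length_compositionSeries _ exists_series.choose_spec.1 exists_series.choose_spec.2

variable {R N M P : Type*} [Ring R] [AddCommGroup N] [Module R N] [AddCommGroup M] [Module R M]
  [AddCommGroup P] [Module R P] {f : N →ₗ[R] M} {g : M →ₗ[R] P}

theorem surjective_iff_length_range_eq (hP : IsFiniteLength R P) :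
    Function.Surjective g ↔ Module.length R g.range = Module.length R P := by
  obtain ⟨_, _⟩ := isFiniteLength_iff_isNoetherian_isArtinian.1 hP
  rw [← LinearMap.range_eq_top]
  refine ⟨fun h ↦ by rw [h, Module.length_top], fun h ↦ ?_⟩
  by_contra ne_top
  exact (Submodule.length_lt ne_top).ne h

theorem surjective_iff_length_add_eq (hM : IsFiniteLength R M) (hP : IsFiniteLength R P)
    (hf : Function.Injective f) (hfg : Function.Exact f g) :
    Function.Surjective g ↔ Module.length R N + Module.length R P = Module.length R M := by
  have length_eq : Module.length R M = Module.length R N + Module.length R g.range :=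
    Module.length_eq_add_of_exact f g.rangeRestrict hf g.surjective_rangeRestrict fun x ↦ by
      rw [← hfg x, Subtype.ext_iff, LinearMap.codRestrict_apply, ZeroMemClass.coe_zero]
  have length_ne_top : Module.length R N ≠ ⊤ := Module.length_ne_top_iff.2 (hM.of_injective hf)
  rw [length_eq, (ENat.addLECancellable_of_ne_top length_ne_top).inj, eq_comm,
    surjective_iff_length_range_eq hP]

end Length

section Hom

variable {A X Y Z M : Type*} [Ring A] [AddCommGroup X] [Module A X] [AddCommGroup Y] [Module A Y]
  [AddCommGroup Z] [Module A Z] [AddCommGroup M] [Module A M] {f : X →ₗ[A] Y} {g : Y →ₗ[A] Z}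

theorem exact_lcomp_lcomp {S : Type*} [Semiring S] [Module S M] [SMulCommClass A S M]
    (hfg : Function.Exact f g) (hg : Function.Surjective g) :
    Function.Exact (g.lcomp S M) (f.lcomp S M) := by
  refine fun φ ↦ ⟨fun hφ ↦ ?_, ?_⟩
  · let ψ : (Y ⧸ f.range) →ₗ[A] M := f.range.liftQ φ (LinearMap.range_le_ker_iff.2 hφ)
    exact ⟨ψ ∘ₗ (hfg.linearEquivOfSurjective hg).symm.toLinearMap, by ext; simp [ψ]⟩
  · rintro ⟨ψ, rfl⟩
    ext x
    simp [hfg.apply_apply_eq_zero]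

theorem isFiniteLength_linearMap [Module.Finite A X] (hM : IsFiniteLength (Module.End A M) M) :
    IsFiniteLength (Module.End A M) (X →ₗ[A] M) := by
  obtain ⟨n, s, hs⟩ := Module.Finite.exists_fin (R := A) (M := X)
  let evalGenerators : (X →ₗ[A] M) →ₗ[Module.End A M] Fin n → M :=
    LinearMap.pi fun i ↦ LinearMap.applyₗ' _ (s i)
  have hpi : IsFiniteLength (Module.End A M) (Fin n → M) := by
    rw [isFiniteLength_iff_isNoetherian_isArtinian] at hM ⊢
    obtain ⟨_, _⟩ := hM
    exact ⟨inferInstance, inferInstance⟩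
  exact hpi.of_injective (f := evalGenerators) fun φ ψ h ↦ LinearMap.ext_on_range hs (congrFun h)

end Hom

section AdditiveLocus

open CategoryTheory

variable {A X Y Z M : Type} [Ring A] [AddCommGroup X] [Module A X] [AddCommGroup Y] [Module A Y]
  [AddCommGroup Z] [Module A Z] [AddCommGroup M] [Module A M] {f : X →ₗ[A] Y} {g : Y →ₗ[A] Z}

theorem coe_chiMod [Module.Finite A X] (hM : IsEndofinite A M) :
    (chiMod A M X : ℕ∞) = Module.length (Module.End A M) (X →ₗ[A] M) :=
  coe_compLength (isFiniteLength_linearMap hM)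

theorem chiMod_add_chiMod_eq_iff [Module.Finite A X] [Module.Finite A Y] [Module.Finite A Z]
    (hM : IsEndofinite A M) (hfg : Function.Exact f g) (hg : Function.Surjective g) :
    chiMod A M X + chiMod A M Z = chiMod A M Y ↔ Function.Surjective (f.lcomp ℕ M) := by
  have length_count := surjective_iff_length_add_eq (isFiniteLength_linearMap hM)
    (isFiniteLength_linearMap hM) (g.lcomp_injective_of_surjective hg)
    (exact_lcomp_lcomp (S := Module.End A M) (M := M) hfg hg)
  rw [← coe_chiMod hM, ← coe_chiMod hM, ← coe_chiMod hM, ← Nat.cast_add, Nat.cast_inj,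
    add_comm] at length_count
  exact length_count.symm

theorem memAdloc_chiMod_iff [IsNoetherianRing A] [Module.Finite A Z] (hM : IsEndofinite A M) :
    MemAdloc A (chiMod A M) Z ↔
      Subsingleton (Abelian.Ext.{0} (ModuleCat.of A Z) (ModuleCat.of A M) 1) := by
  constructor
  · rintro ⟨-, additive⟩
    obtain ⟨n, p, hp⟩ := Module.Finite.exists_fin' A Z
    have exact_p := p.exact_subtype_ker_map
    refine subsingleton_ext_one_of_surjective_lcomp hp ?_
    rw [← chiMod_add_chiMod_eq_iff hM exact_p hp]
    exact additive _ _ inferInstance inferInstance _ p p.ker.injective_subtype exact_p hp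
  · refine fun ext_eq_zero ↦ ⟨inferInstance, fun X Y _ _ _ _ _ _ f g hf hfg hg ↦ ?_⟩
    exact (chiMod_add_chiMod_eq_iff hM hfg hg).2
      (surjective_lcomp_of_subsingleton_ext_one hf hfg hg ext_eq_zero)

end AdditiveLocus

section GroupRepresentations

open Representation MonoidAlgebra
open scoped TensorProduct

variable {k G V W : Type*} [CommRing k] [Group G] [AddCommGroup V] [Module k V]
  [AddCommGroup W] [Module k W]

/-- The `k`-linear isomorphism `kG ⊗ V ≃ V ⊗ kG` sending `g ⊗ v` to `ρ g v ⊗ g`. -/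
noncomputable def untwistLinearEquiv (ρ : Representation k G V) : k[G] ⊗[k] V ≃ₗ[k] V ⊗[k] k[G] :=
  .ofLinearMap
    (TensorProduct.lift <| (Finsupp.lsum k fun g ↦ LinearMap.toSpanSingleton k _
      ((TensorProduct.mk k V k[G]).flip (single g 1) ∘ₗ ρ g)) ∘ₗ (coeffLinearEquiv k).toLinearMap)
    (TensorProduct.lift <| ((Finsupp.lsum k fun g ↦ LinearMap.toSpanSingleton k _
      (TensorProduct.mk k k[G] V (single g 1) ∘ₗ ρ g⁻¹)) ∘ₗ (coeffLinearEquiv k).toLinearMap).flip)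
    (by ext; simp) (by ext; simp)

/-- The `kG`-linear map `kG ⊗ V → V ⊗ kG` sending `1 ⊗ v` to `v ⊗ 1`, where `G` acts on the left
factor of the source and diagonally on the target. -/
noncomputable def untwistLinearMap (ρ : Representation k G V) :
    k[G] ⊗[k] V →ₗ[k[G]] (ρ.tprod (leftRegular k G)).asModule :=
  TensorProduct.AlgebraTensorModule.lift <| LinearMap.toSpanSingleton k[G] _ <|
    (ρ.tprod (leftRegular k G)).asModuleEquiv.symm.toLinearMap ∘ₗ (TensorProduct.mk k V k[G]).flip 1

theorem restrictScalars_untwistLinearMap (ρ : Representation k G V) :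
    (untwistLinearMap ρ).restrictScalars k =
      (ρ.tprod (leftRegular k G)).asModuleEquiv.symm.toLinearMap ∘ₗ
        (untwistLinearEquiv ρ).toLinearMap := by
  ext g v
  let e := (ρ.tprod (leftRegular k G)).asModuleEquiv
  calc untwistLinearMap ρ (single g 1 ⊗ₜ v)
      = of k G g • e.symm (v ⊗ₜ single 1 1) := rfl
    _ = e.symm (ρ.tprod (leftRegular k G) g (v ⊗ₜ single 1 1)) :=
      (asModuleEquiv_symm_map_rho _ g _).symm
    _ = e.symm (untwistLinearEquiv ρ (single g 1 ⊗ₜ v)) := by simp [untwistLinearEquiv]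

theorem bijective_untwistLinearMap (ρ : Representation k G V) :
    Function.Bijective (untwistLinearMap ρ) := by
  rw [← LinearMap.coe_restrictScalars k, restrictScalars_untwistLinearMap]
  exact (untwistLinearEquiv ρ ≪≫ₗ (ρ.tprod (leftRegular k G)).asModuleEquiv.symm).bijective

instance projective_asModule_tprod_leftRegular [Module.Projective k V] (ρ : Representation k G V) :
    Module.Projective k[G] (ρ.tprod (leftRegular k G)).asModule :=
  .of_equiv (LinearEquiv.ofBijective _ (bijective_untwistLinearMap ρ))

/-- The augmentation `kG → k`, as a morphism from the regular to the trivial representation. -/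
noncomputable def augmentation (k G : Type*) [CommRing k] [Group G] :
    (leftRegular k G).IntertwiningMap (trivial k G k) :=
  (leftRegularMapEquiv (trivial k G k)).symm 1

theorem surjective_augmentation : Function.Surjective (augmentation k G) := fun r ↦
  ⟨single 1 r, by simp [augmentation]⟩

/-- The augmentation ideal, as a submodule of the regular representation. -/
noncomputable def augmentationKernel (k G : Type*) [CommRing k] [Group G] :
    Submodule k[G] (leftRegular k G).asModule :=
  LinearMap.ker (IntertwiningMap.equivLinearMapAsModule _ _ (augmentation k G))

theorem exact_subtype_augmentationKernel (k G : Type*) [CommRing k] [Group G] :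
    Function.Exact (augmentationKernel k G).subtype (augmentation k G) :=
  LinearMap.exact_subtype_ker_map (IntertwiningMap.equivLinearMapAsModule _ _ (augmentation k G))

instance finite_asModule_leftRegular : Module.Finite k[G] (leftRegular k G).asModule :=
  .equiv (ofMulActionSelfAsModuleEquiv (k := k) (G := G)).symm

instance finite_augmentationKernel [IsNoetherianRing k] [Finite G] :
    Module.Finite k[G] (augmentationKernel k G) :=
  have : IsNoetherianRing k[G] := .of_finite k _
  inferInstance

/-- Passing from a `kG`-module to a representation and back recovers the module. -/
noncomputable def ofModuleAsModuleEquiv (X : Type*) [AddCommGroup X] [Module k[G] X] :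
    (ofModule (k := k) (G := G) X).asModule ≃ₗ[k[G]] X :=
  { (ofModule (k := k) (G := G) X).asModuleEquiv.toAddEquiv.trans
      (RestrictScalars.addEquiv k k[G] X) with
    map_smul' := smul_ofModule_asModule X }

/-- A `kG`-linear map into the module of a representation, as a morphism of representations. -/
noncomputable def ofModuleIntertwiningMap {X : Type*} [AddCommGroup X] [Module k[G] X]
    {ρ : Representation k G V} (f : X →ₗ[k[G]] ρ.asModule) :
    (ofModule (k := k) (G := G) X).IntertwiningMap ρ :=
  (IntertwiningMap.equivLinearMapAsModule _ _).symm (f ∘ₗ (ofModuleAsModuleEquiv X).toLinearMap)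

/-- The `kG`-linear map `V ⊗ kG → V` sending `v ⊗ g` to `v`, where `G` acts diagonally on the
source. -/
noncomputable def tprodAugmentation (ρ : Representation k G V) :
    (ρ.tprod (leftRegular k G)).asModule →ₗ[k[G]] ρ.asModule :=
  IntertwiningMap.equivLinearMapAsModule _ _ <|
    (Representation.TensorProduct.rid k ρ).toIntertwiningMap.comp ((augmentation k G).lTensor ρ)

theorem surjective_tprodAugmentation (ρ : Representation k G V) :
    Function.Surjective (tprodAugmentation ρ) :=
  (TensorProduct.rid k V).surjective.comp
    (LinearMap.lTensor_surjective V (g := (augmentation k G).toLinearMap) surjective_augmentation)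

theorem exact_lTensor_tprodAugmentation (ρ : Representation k G V) {τ : Representation k G W}
    {i : τ.IntertwiningMap (leftRegular k G)} (hi : Function.Exact i (augmentation k G)) :
    Function.Exact (i.lTensor ρ) (tprodAugmentation ρ) :=
  (lTensor_exact V (f := i.toLinearMap) (g := (augmentation k G).toLinearMap) hi
    surjective_augmentation).comp_injective
      (TensorProduct.rid k V) (TensorProduct.rid k V).injective (map_zero _)

end GroupRepresentations

section TensorAugmentation

open CategoryTheory Representation MonoidAlgebra

universe w u

variable {k G V W X M : Type u} [CommRing k] [Group G] [AddCommGroup V] [Module k V]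
  [AddCommGroup W] [Module k W] [AddCommGroup X] [Module k[G] X] [AddCommGroup M] [Module k[G] M]

theorem subsingleton_ext_succ_of_exact_augmentation [HasExt.{w} (ModuleCat.{u} k[G])]
    [Module.Projective k V] (ρ : Representation k G V) (e : ρ.asModule ≃ₗ[k[G]] X)
    {τ : Representation k G W} {i : τ.IntertwiningMap (leftRegular k G)}
    (injective_i : Function.Injective i)
    (exact_i : Function.Exact i (augmentation k G)) {n : ℕ}
    (h : Subsingleton
      (Abelian.Ext.{w} (ModuleCat.of k[G] (ρ.tprod τ).asModule) (ModuleCat.of k[G] M) n)) :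
    Subsingleton (Abelian.Ext.{w} (ModuleCat.of k[G] X) (ModuleCat.of k[G] M) (n + 1)) :=
  subsingleton_moduleCat_ext_succ (g := e.toLinearMap ∘ₗ tprodAugmentation ρ)
    (f := IntertwiningMap.equivLinearMapAsModule _ _ (i.lTensor ρ))
    (Module.Flat.lTensor_preserves_injective_linearMap i.toLinearMap injective_i)
    ((exact_lTensor_tprodAugmentation ρ exact_i).comp_injective e e.injective (map_zero _))
    (e.surjective.comp (surjective_tprodAugmentation ρ)) h

end TensorAugmentation

section TensorClosed

open CategoryTheory Representation MonoidAlgebra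

/-- The scalar action of `k` on a `kG`-module, over the additive group structure of
`RestrictScalars` that enters the definition of `dtensor`. -/
noncomputable instance restrictScalarsModule (k G X : Type*) [CommRing k] [Group G]
    [AddCommGroup X] [Module k[G] X] :
    @Module k (RestrictScalars k k[G] X) _
      (instAddCommGroupRestrictScalars k k[G] X).toAddCommMonoid :=
  RestrictScalars.module k k[G] X

variable {k G X M : Type} [Field k] [Group G] [AddCommGroup X] [Module k[G] X]
  [AddCommGroup M] [Module k[G] M]

theorem subsingleton_ext_succ_of_dtensor {N : Type} [AddCommGroup N] [Module k[G] N]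
    {i : N →ₗ[k[G]] (leftRegular k G).asModule} (injective_i : Function.Injective i)
    (exact_i : Function.Exact i (augmentation k G)) {n : ℕ}
    (h : Subsingleton
      (Abelian.Ext.{0} (ModuleCat.of k[G] (dtensor k G X N)) (ModuleCat.of k[G] M) n)) :
    Subsingleton (Abelian.Ext.{0} (ModuleCat.of k[G] X) (ModuleCat.of k[G] M) (n + 1)) :=
  have := Module.Projective.of_basis (Module.Basis.ofVectorSpace k (RestrictScalars k k[G] X))
  subsingleton_ext_succ_of_exact_augmentation (ofModule X) (ofModuleAsModuleEquiv X)
    (i := ofModuleIntertwiningMap i) injective_i exact_i h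

theorem MemAdloc.subsingleton_ext [Finite G] (hM : IsEndofinite k[G] M)
    (hT : TensorClosed k G (chiMod k[G] M)) (n : ℕ) (hX : MemAdloc k[G] (chiMod k[G] M) X) :
    Subsingleton (Abelian.Ext.{0} (ModuleCat.of k[G] X) (ModuleCat.of k[G] M) (n + 1)) := by
  induction n generalizing X with
  | zero =>
    have : IsNoetherianRing k[G] := .of_finite k _
    have := hX.1
    exact (memAdloc_chiMod_iff hM).1 hX
  | succ n ih =>
    exact subsingleton_ext_succ_of_dtensor (augmentationKernel k G).injective_subtype
      (exact_subtype_augmentationKernel k G)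
      (ih (hT X (augmentationKernel k G) hX inferInstance))

end TensorClosed

open CategoryTheory in
/-- For a finite group `G`, a field `k` and an endofinite `kG`-module `M`
whose subadditive function `χ_M` is tensor closed, a finite dimensional `kG`-module `X`
lies in `Adloc(χ_M)` if and only if `Ext^n_{kG}(X, M) = 0` for all `n ≥ 1`. -/
theorem statement6 (k G : Type) [Field k] [Group G] [Finite G]
    (M : Type) [AddCommGroup M] [Module (MonoidAlgebra k G) M]
    (hM : IsEndofinite (MonoidAlgebra k G) M)
    (hT : TensorClosed k G (chiMod (MonoidAlgebra k G) M))
    (X : Type) [AddCommGroup X] [Module (MonoidAlgebra k G) X]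
    (hX : Module.Finite (MonoidAlgebra k G) X) :
    MemAdloc (MonoidAlgebra k G) (chiMod (MonoidAlgebra k G) M) X ↔
      ∀ n : ℕ, 1 ≤ n →
        Subsingleton (((Ext ℤ (ModuleCat (MonoidAlgebra k G)) n).obj
          (Opposite.op (ModuleCat.of (MonoidAlgebra k G) X))).obj
            (ModuleCat.of (MonoidAlgebra k G) M)) := by
  have : IsNoetherianRing (MonoidAlgebra k G) := .of_finite k _
  constructor
  · rintro memAdloc (_ | n) hn
    · contradiction
    · exact (subsingleton_ext_obj_iff _ _ n).2 (memAdloc.subsingleton_ext hM hT n)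
  · intro ext_eq_zero
    exact (memAdloc_chiMod_iff hM).2 <| (subsingleton_ext_obj_iff _ _ 0).1 (ext_eq_zero 1 le_rfl)
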